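/- arXiv:1707.02409 — 2 statements merged into one kernel-verified Lean document; each statement's English description precedes it below -/
import Mathlib

section
/- Let n be odd. Assume X_1 ~ Bernoulli(p) and X_k = X_{k−1} ⊕ U_k for k = 2,…,n with U_2,…,U_n i.i.d. Bernoulli(r) independent of X_1, and Y_k = X_k ⊕ V_k with V_1,…,V_n i.i.d. Bernoulli(α) independent of X^n, where p ∈ [1/2, 1), α ∈ (0, 1/2), (1−α)(1−p) > αp, and r/(1−r) < (α/(1−α))^{n−1}. Then P_c(X^n|Y^n) = (1−α)^n (1−r)^{n−1} Σ_{k=0}^{(n−1)/2} C(n,k) (α/(1−α))^k =: T, and there exists ε_L < T such that for every ε ∈ [ε_L, T]: 1 − ζ(ε)·Pr(Y^n = (1,…,1)) ≤ S(ε) ≤ 1 − ζ(ε)·α^n, where S(ε) := sup{P_c(Y^n|Z^n) : P_{Z^n|Y^n} a channel with output alphabet {0,1}^n, X^n–Y^n–Z^n a Markov chain, P_c(X^n|Z^n) ≤ ε} and ζ(ε) := (1−r)(T − ε)/(p((1−α)(1−r))^n − (1−p)(α(1−r))^n). Moreover, the lower bound is attained by the 2^n-ary Z-channel that maps every y^n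 ≠ (1,…,1) to itself with probability 1 and maps (1,…,1) to (0,…,0) with probability ζ(ε) and to (1,…,1) with probability 1 − ζ(ε). -/
open Finset

/-- `bern p b = p` if `b = true`, and `1 - p` otherwise. -/
noncomputable def bern (p : ℝ) (b : Bool) : ℝ := if b then p else 1 - p

/-- Joint pmf of `(X^n, Y^n)` where `X_1,…,X_n` are i.i.d. `Bernoulli(p)` and
`Y_k = X_k ⊕ V_k` with `V_1,…,V_n` i.i.d. `Bernoulli(α)` independent of `X^n`. -/
noncomputable def jointIID (n : ℕ) (p α : ℝ) :
    (Fin n → Bool) → (Fin n → Bool) → ℝ :=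
  fun x y => ∏ k, bern p (x k) * bern α (xor (x k) (y k))

/-- `F` is a channel (row-stochastic matrix) on a finite alphabet. -/
def IsChannel {V : Type*} [Fintype V] (F : V → V → ℝ) : Prop :=
  (∀ y z, 0 ≤ F y z) ∧ ∀ y, ∑ z, F y z = 1

/-- `P_c(X|Z)` where `Z` is the output of the channel `F` applied to `Y` and
`X – Y – Z` is a Markov chain, for joint pmf `P` of `(X,Y)`. -/
noncomputable def pcXZ {X V : Type*} [Fintype X] [Fintype V] [Nonempty X]
    (P : X → V → ℝ) (F : V → V → ℝ) : ℝ :=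
  ∑ z, ⨆ x, ∑ y, P x y * F y z

/-- `P_c(Y|Z)` where `Z` is the output of the channel `F` applied to `Y`. -/
noncomputable def pcYZ {X V : Type*} [Fintype X] [Fintype V] [Nonempty V]
    (P : X → V → ℝ) (F : V → V → ℝ) : ℝ :=
  ∑ z, ⨆ y, (∑ x, P x y) * F y z

/-- The Z-channel from `y0` to `z0` with crossover probability `ζ`: every `y ≠ y0` is
mapped to itself with probability `1`, while `y0` is mapped to `z0` with probability
`ζ` and to itself with probability `1 − ζ`. -/
noncomputable def Zch {V : Type*} [DecidableEq V] (y0 z0 : V) (ζ : ℝ) : V → V → ℝ :=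
  fun y z =>
    if y = y0 then (if z = z0 then ζ else if z = y0 then 1 - ζ else 0)
    else (if z = y then 1 else 0)

/-- Joint pmf of `(X^n, Y^n)` for odd `n = 2m+1`, where `X_1 ~ Bernoulli(p)`,
`X_k = X_{k−1} ⊕ U_k` with `U_2,…,U_n` i.i.d. `Bernoulli(r)` independent of `X_1`, and
`Y_k = X_k ⊕ V_k` with `V_1,…,V_n` i.i.d. `Bernoulli(α)` independent of `X^n`. -/
noncomputable def jointMarkov (m : ℕ) (p r α : ℝ) :
    (Fin (2 * m + 1) → Bool) → (Fin (2 * m + 1) → Bool) → ℝ :=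
  fun x y =>
    (bern p (x 0) * ∏ i : Fin (2 * m), bern r (xor (x i.succ) (x i.castSucc))) *
      ∏ k, bern α (xor (x k) (y k))

section GeneralChannels

variable {X V : Type*} [Fintype X] [Fintype V]

lemma le_iSup_of_finite {ι : Type*} [Finite ι] (f : ι → ℝ) (i : ι) : f i ≤ ⨆ j, f j :=
  le_ciSup (Set.finite_range f).bddAbove i

/-- If guessing `g y'` instead of `g y` costs at most `q y / c`, then the loss in utility of any
channel is at least `c` times the gain in privacy. -/
lemma mul_sub_pcXZ_le_one_sub_pcYZ [Nonempty X] [Nonempty V] (P : X → V → ℝ) (g : V → X) (c : ℝ)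
    (hc0 : 0 ≤ c) (hc : ∀ y y', c * (P (g y) y - P (g y') y) ≤ ∑ x, P x y)
    (hP : ∑ y, ∑ x, P x y = 1) (F : V → V → ℝ) (hF : IsChannel F) :
    c * (∑ y, P (g y) y - pcXZ P F) ≤ 1 - pcYZ P F := by
  classical
  have hT : ∑ y, P (g y) y = ∑ z, ∑ y, P (g y) y * F y z := by
    rw [Finset.sum_comm]
    exact Finset.sum_congr rfl fun y _ => by rw [← Finset.mul_sum, hF.2, mul_one]
  have h1 : (1 : ℝ) = ∑ z, ∑ y, (∑ x, P x y) * F y z := by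
    rw [Finset.sum_comm, ← hP]
    exact Finset.sum_congr rfl fun y _ => by rw [← Finset.mul_sum, hF.2, mul_one]
  rw [hT, h1, pcXZ, pcYZ, ← Finset.sum_sub_distrib, ← Finset.sum_sub_distrib, Finset.mul_sum]
  refine Finset.sum_le_sum fun z _ => ?_
  obtain ⟨y', hy'⟩ := exists_eq_ciSup_of_finite (f := fun y => (∑ x, P x y) * F y z)
  rw [← hy']
  have hx := le_iSup_of_finite (fun x => ∑ y, P x y * F y z) (g y')
  calc c * (∑ y, P (g y) y * F y z - ⨆ x, ∑ y, P x y * F y z)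
      ≤ c * (∑ y, P (g y) y * F y z - ∑ y, P (g y') y * F y z) := by gcongr
    _ = ∑ y, c * (P (g y) y - P (g y') y) * F y z := by
        rw [← Finset.sum_sub_distrib, Finset.mul_sum]
        exact Finset.sum_congr rfl fun y _ => by ring
    _ = ∑ y ∈ univ.erase y', c * (P (g y) y - P (g y') y) * F y z := by
        rw [← Finset.add_sum_erase univ _ (Finset.mem_univ y')]
        simp
    _ ≤ ∑ y ∈ univ.erase y', (∑ x, P x y) * F y z :=
        Finset.sum_le_sum fun y _ => mul_le_mul_of_nonneg_right (hc y y') (hF.1 y z)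
    _ = ∑ y, (∑ x, P x y) * F y z - (∑ x, P x y') * F y' z := by
        rw [← Finset.add_sum_erase univ _ (Finset.mem_univ y')]
        ring

end GeneralChannels

section ZChannel

variable {X V : Type*} [DecidableEq V]

lemma Zch_eq_add {y0 z0 : V} (h : y0 ≠ z0) (ζ : ℝ) (y z : V) :
    Zch y0 z0 ζ y z = (if y = z then 1 else 0) +
      if y = y0 then ζ * ((if z = z0 then 1 else 0) - if z = y0 then 1 else 0) else 0 := by
  unfold Zch
  by_cases h1 : y = y0
  · subst h1
    by_cases h2 : z = z0
    · subst h2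
      simp [h, h.symm]
    · by_cases h3 : z = y
      · subst h3
        simp [h]
        ring
      · simp [h2, h3, Ne.symm h3]
  · simp [h1, eq_comm]

variable [Fintype X] [Fintype V]

lemma isChannel_Zch {y0 z0 : V} (h : y0 ≠ z0) {ζ : ℝ} (h0 : 0 ≤ ζ) (h1 : ζ ≤ 1) :
    IsChannel (Zch y0 z0 ζ) := by
  refine ⟨fun y z => ?_, fun y => ?_⟩
  · unfold Zch
    split_ifs <;> linarith
  · simp only [Zch_eq_add h, Finset.sum_add_distrib]
    by_cases hy : y = y0 <;> simp [hy, ← Finset.mul_sum]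

lemma sum_mul_Zch {y0 z0 : V} (h : y0 ≠ z0) (ζ : ℝ) (f : V → ℝ) (z : V) :
    ∑ y, f y * Zch y0 z0 ζ y z =
      f z + ζ * f y0 * ((if z = z0 then 1 else 0) - if z = y0 then 1 else 0) := by
  simp only [Zch_eq_add h, mul_add, Finset.sum_add_distrib, mul_ite, mul_zero, mul_one,
    Finset.sum_ite_eq', Finset.mem_univ, if_true]
  ring

/-- The privacy leakage of a Z-channel whose crossover probability is small enough not to change
the optimal guess at `z0`. -/
lemma pcXZ_Zch_le [Nonempty X] {y0 z0 : V} (h : y0 ≠ z0) {ζ : ℝ} (h1 : ζ ≤ 1) (P : X → V → ℝ)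
    (g : V → X) (hg : ∀ x y, P x y ≤ P (g y) y)
    (hz0 : ∀ x, P x z0 + ζ * P x y0 ≤ P (g z0) z0 + ζ * P (g z0) y0) :
    pcXZ P (Zch y0 z0 ζ) ≤ ∑ y, P (g y) y - ζ * (P (g y0) y0 - P (g z0) y0) := by
  have key : ∀ z, ⨆ x, ∑ y, P x y * Zch y0 z0 ζ y z ≤
      P (g z) z + ζ * P (g z) y0 * ((if z = z0 then 1 else 0) - if z = y0 then 1 else 0) := by
    intro z
    refine ciSup_le fun x => ?_
    rw [sum_mul_Zch h]
    by_cases hz : z = z0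
    · subst hz
      simpa [h.symm] using hz0 x
    · by_cases hy : z = y0
      · subst hy
        simp only [hz, if_false, if_true]
        nlinarith [hg x z]
      · simpa [hz, hy] using hg x z
  refine (Finset.sum_le_sum fun z _ => key z).trans (le_of_eq ?_)
  simp only [Finset.sum_add_distrib, mul_sub, Finset.sum_sub_distrib, mul_ite, mul_one, mul_zero,
    Finset.sum_ite_eq', Finset.mem_univ, if_true]
  ring

lemma pcYZ_Zch [Nonempty V] {y0 z0 : V} (h : y0 ≠ z0) {ζ : ℝ} (h1 : ζ ≤ 1)
    (P : X → V → ℝ) (hq : ∀ y, 0 ≤ ∑ x, P x y) (hP : ∑ y, ∑ x, P x y = 1)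
    (hz0 : ζ * ∑ x, P x y0 ≤ ∑ x, P x z0) :
    pcYZ P (Zch y0 z0 ζ) = 1 - ζ * ∑ x, P x y0 := by
  have key : ∀ z, ⨆ y, (∑ x, P x y) * Zch y0 z0 ζ y z =
      (∑ x, P x z) - if z = y0 then ζ * ∑ x, P x y0 else 0 := by
    intro z
    refine le_antisymm (ciSup_le fun y => ?_) ?_
    · have hz := hq z
      have hy := hq y
      by_cases hyz : y = z
      · subst hyz
        by_cases hy0 : y = y0
        · subst hy0
          simp only [Zch, h, if_true, if_false]
          linarith
        · simp [Zch, hy0]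
      · by_cases hy0 : y = y0
        · subst hy0
          by_cases hzz : z = z0
          · subst hzz
            simp only [Zch, if_true, Ne.symm hyz, if_false]
            linarith
          · simp [Zch, hzz, Ne.symm hyz, hz]
        · have : 0 ≤ (∑ x, P x z) - if z = y0 then ζ * ∑ x, P x y0 else 0 := by
            split_ifs with hzy
            · subst hzy
              nlinarith
            · linarith
          simpa [Zch, hy0, Ne.symm hyz] using this
    · refine le_trans (le_of_eq ?_)
        (le_iSup_of_finite (fun y => (∑ x, P x y) * Zch y0 z0 ζ y z) z)
      by_cases hy0 : z = y0
      · subst hy0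
        simp only [Zch, h, if_true, if_false]
        ring
      · simp [Zch, hy0]
  simp only [pcYZ, key, Finset.sum_sub_distrib, hP, Finset.sum_ite_eq', Finset.mem_univ, if_true]

end ZChannel

section MarkovSource

lemma sum_bern (p : ℝ) : ∑ b, bern p b = 1 := by simp [bern]

lemma sum_bern_xor_right (p : ℝ) (a : Bool) : ∑ b, bern p (xor b a) = 1 := by
  cases a <;> simp [bern]

lemma sum_bern_xor_left (p : ℝ) (a : Bool) : ∑ b, bern p (xor a b) = 1 := by
  cases a <;> simp [bern]

lemma bern_nonneg {p : ℝ} (h0 : 0 ≤ p) (h1 : p ≤ 1) (b : Bool) : 0 ≤ bern p b := by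
  cases b <;> simp [bern, h0, h1]

lemma bern_le_one_sub {p : ℝ} (h : p ≤ 1 / 2) (b : Bool) : bern p b ≤ 1 - p := by
  cases b <;> simp [bern]
  linarith

lemma le_bern {p : ℝ} (h : p ≤ 1 / 2) (b : Bool) : p ≤ bern p b := by
  cases b <;> simp [bern]
  linarith

/-- A Markov chain path measure with initial weights `f` has total mass `∑ b, f b`. -/
lemma sum_markov_path (r : ℝ) (N : ℕ) (f : Bool → ℝ) :
    ∑ x : Fin (N + 1) → Bool,
      f (x 0) * ∏ i : Fin N, bern r (xor (x i.succ) (x i.castSucc)) = ∑ b, f b := by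
  induction N generalizing f with
  | zero =>
    rw [← (Equiv.funUnique (Fin 1) Bool).symm.sum_comp]
    simp
  | succ N ih =>
    rw [← (Fin.consEquiv fun _ : Fin (N + 2) => Bool).sum_comp, Fintype.sum_prod_type]
    refine Finset.sum_congr rfl fun a _ => ?_
    have := ih (fun b => bern r (xor b a))
    rw [sum_bern_xor_right] at this
    rw [← mul_one (f a), ← this, Finset.mul_sum]
    refine Finset.sum_congr rfl fun x _ => ?_
    simp [Fin.consEquiv, Fin.prod_univ_succ]

lemma sum_prod_bern_xor (α : ℝ) (n : ℕ) (x : Fin n → Bool) :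
    ∑ y : Fin n → Bool, ∏ k, bern α (xor (x k) (y k)) = 1 := by
  have := Finset.prod_univ_sum (fun _ : Fin n => (univ : Finset Bool))
    (fun k b => bern α (xor (x k) b))
  rw [Fintype.piFinset_univ] at this
  rw [← this]
  simp only [sum_bern_xor_left, Finset.prod_const_one]

lemma sum_jointMarkov (m : ℕ) (p r α : ℝ) : ∑ y, ∑ x, jointMarkov m p r α x y = 1 := by
  rw [Finset.sum_comm]
  simp only [jointMarkov, ← Finset.mul_sum, sum_prod_bern_xor, mul_one]
  rw [sum_markov_path r (2 * m) (bern p), sum_bern]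

/-- Every output vector has probability at least `α ^ n`. -/
lemma pow_le_sum_jointMarkov (m : ℕ) {p r α : ℝ} (hp0 : 0 ≤ p) (hp1 : p ≤ 1) (hr0 : 0 ≤ r)
    (hr1 : r ≤ 1) (hα0 : 0 ≤ α) (hα1 : α ≤ 1 / 2) (y : Fin (2 * m + 1) → Bool) :
    α ^ (2 * m + 1) ≤ ∑ x, jointMarkov m p r α x y := by
  have h := sum_markov_path r (2 * m) (bern p)
  rw [sum_bern] at h
  rw [← one_mul (α ^ _), ← h, Finset.sum_mul]
  refine Finset.sum_le_sum fun x _ => mul_le_mul_of_nonneg_left ?_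
    (mul_nonneg (bern_nonneg hp0 hp1 _) (Finset.prod_nonneg fun _ _ => bern_nonneg hr0 hr1 _))
  calc α ^ (2 * m + 1) = ∏ _k : Fin (2 * m + 1), α := by simp
    _ ≤ _ := Finset.prod_le_prod (fun _ _ => hα0) fun k _ => le_bern hα1 _

/-- The number of coordinates of `y` different from `b`. -/
def distConst {n : ℕ} (b : Bool) (y : Fin n → Bool) : ℕ := #{k | y k ≠ b}

lemma distConst_le {n : ℕ} (b : Bool) (y : Fin n → Bool) : distConst b y ≤ n := by
  simpa [distConst] using Finset.card_filter_le (univ : Finset (Fin n)) (fun k => y k ≠ b)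

lemma distConst_not {n : ℕ} (b : Bool) (y : Fin n → Bool) :
    distConst (!b) y = n - distConst b y := by
  have h := Finset.card_filter_add_card_filter_not (s := (univ : Finset (Fin n)))
    (fun k => y k ≠ b)
  have h2 : ∀ k, ¬ (y k ≠ b) ↔ y k ≠ !b := fun k => by cases y k <;> cases b <;> simp
  simp only [h2, Finset.card_univ, Fintype.card_fin] at h
  unfold distConst
  omega

/-- The majority bit of a vector of length `2 * m + 1`. -/
def majority {m : ℕ} (y : Fin (2 * m + 1) → Bool) : Bool := decide (m < distConst false y)

lemma distConst_majority_le {m : ℕ} (y : Fin (2 * m + 1) → Bool) :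
    distConst (majority y) y ≤ m := by
  have h := distConst_not false y
  unfold majority
  by_cases hy : m < distConst false y
  · simp only [Bool.not_false] at h
    simp only [hy, decide_true, h]
    omega
  · simp only [hy, decide_false]
    omega

lemma distConst_const_self {n : ℕ} (b : Bool) : distConst b (fun _ : Fin n => b) = 0 := by
  simp [distConst]

lemma distConst_const_not {n : ℕ} (b : Bool) : distConst (!b) (fun _ : Fin n => b) = n := by
  rw [distConst_not, distConst_const_self, Nat.sub_zero]

lemma majority_const {m : ℕ} (b : Bool) : majority (fun _ : Fin (2 * m + 1) => b) = b := by
  cases b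
  · simp [majority, distConst]
  · simp [majority, distConst]
    omega

lemma prod_bern_xor_const (α : ℝ) {n : ℕ} (b : Bool) (y : Fin n → Bool) :
    ∏ k, bern α (xor b (y k)) = α ^ distConst b y * (1 - α) ^ (n - distConst b y) := by
  have h : ∀ k, bern α (xor b (y k)) = if y k ≠ b then α else 1 - α := fun k => by
    cases y k <;> cases b <;> simp [bern]
  rw [← distConst_not, Finset.prod_congr rfl fun k _ => h k, Finset.prod_ite, Finset.prod_const,
    Finset.prod_const]
  have h2 : ∀ k, ¬ (y k ≠ b) ↔ y k ≠ !b := fun k => by cases y k <;> cases b <;> simp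
  simp only [h2, distConst]

lemma jointMarkov_const (m : ℕ) (p r α : ℝ) (b : Bool) (y : Fin (2 * m + 1) → Bool) :
    jointMarkov m p r α (fun _ => b) y = bern p b * (1 - r) ^ (2 * m) *
      (α ^ distConst b y * (1 - α) ^ (2 * m + 1 - distConst b y)) := by
  have h : bern r false = 1 - r := by simp [bern]
  simp only [jointMarkov, prod_bern_xor_const α b y, Bool.xor_self, h, Finset.prod_const,
    Finset.card_univ, Fintype.card_fin]

lemma exists_step_of_ne_const {N : ℕ} (x : Fin (N + 1) → Bool) (h : ∀ b, x ≠ fun _ => b) :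
    ∃ i : Fin N, x i.succ ≠ x i.castSucc := by
  by_contra! hx
  refine h (x 0) (funext fun k => ?_)
  induction k using Fin.induction with
  | zero => rfl
  | succ i ih => rw [hx, ih]

lemma prod_bern_step_le {r : ℝ} (hr0 : 0 ≤ r) (hr : r ≤ 1 / 2) {N : ℕ} (x : Fin (N + 1) → Bool)
    (i : Fin N) (hi : x i.succ ≠ x i.castSucc) :
    ∏ j : Fin N, bern r (xor (x j.succ) (x j.castSucc)) ≤ r * (1 - r) ^ (N - 1) := by
  rw [← Finset.mul_prod_erase univ _ (Finset.mem_univ i)]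
  have hxor : (x i.succ ^^ x i.castSucc) = true := by simpa using hi
  have : bern r (xor (x i.succ) (x i.castSucc)) = r := by rw [hxor]; simp [bern]
  rw [this]
  refine mul_le_mul_of_nonneg_left ?_ hr0
  refine (Finset.prod_le_prod (fun j _ => bern_nonneg hr0 (by linarith) _)
    fun j _ => bern_le_one_sub hr _).trans (le_of_eq ?_)
  simp

lemma le_half_of_div_lt_pow {r α : ℝ} {m : ℕ} (hα : α ∈ Set.Ioo (0 : ℝ) (1 / 2)) (hr1 : r < 1)
    (hrα : r / (1 - r) < (α / (1 - α)) ^ (2 * m)) : r ≤ 1 / 2 := by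
  obtain ⟨h0, h1⟩ := hα
  have h2 : (α / (1 - α)) ^ (2 * m) ≤ 1 :=
    pow_le_one₀ (div_nonneg h0.le (by linarith)) ((div_le_one (by linarith)).2 (by linarith))
  have h3 := (div_lt_one (by linarith : (0 : ℝ) < 1 - r)).1 (hrα.trans_le h2)
  linarith

/-- The constant vector of the majority bit of `y` is the unique best guess given `y`. -/
lemma jointMarkov_lt_majority {m : ℕ} {p r α : ℝ}
    (hp : p ∈ Set.Ico (1 / 2 : ℝ) 1) (hα : α ∈ Set.Ioo (0 : ℝ) (1 / 2))
    (hr0 : 0 ≤ r) (hr1 : r < 1) (hnt : α * p < (1 - α) * (1 - p))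
    (hrα : r / (1 - r) < (α / (1 - α)) ^ (2 * m)) (x y : Fin (2 * m + 1) → Bool)
    (hx : x ≠ fun _ => majority y) :
    jointMarkov m p r α x y < jointMarkov m p r α (fun _ => majority y) y := by
  have hr : r ≤ 1 / 2 := le_half_of_div_lt_pow hα hr1 hrα
  obtain ⟨hα0, hα1⟩ := hα
  obtain ⟨hp0, hp1⟩ := hp
  have hr' : 0 < 1 - r := by linarith
  have hα' : 0 < 1 - α := by linarith
  have hd := distConst_majority_le y
  set b := majority y
  have hb : bern p (!b) * α < bern p b * (1 - α) := by
    cases b <;> simp only [bern, Bool.not_true, Bool.not_false, if_true] <;> norm_num <;> nlinarith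
  by_cases hc : ∃ a, x = fun _ => a
  · obtain ⟨a, rfl⟩ := hc
    have ha : a = !b := by
      have : a ≠ b := fun h => hx (by rw [h])
      revert this
      cases a <;> cases b <;> simp
    subst ha
    rw [jointMarkov_const, jointMarkov_const, distConst_not]
    obtain ⟨j, hj⟩ := Nat.exists_eq_add_of_le hd
    set d := distConst b y
    have e1 : 2 * m + 1 - d = d + 1 + 2 * j := by omega
    have e2 : 2 * m + 1 - (d + 1 + 2 * j) = d := by omega
    rw [e1, e2]
    have hpow : α ^ (2 * j) ≤ (1 - α) ^ (2 * j) := pow_le_pow_left₀ hα0.le (by linarith) _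
    have hbn : 0 ≤ bern p (!b) := bern_nonneg (by linarith) hp1.le _
    have hpos : 0 < (1 - r) ^ (2 * m) * (α ^ d * (1 - α) ^ d) := by positivity
    calc _ = (1 - r) ^ (2 * m) * (α ^ d * (1 - α) ^ d) * (bern p (!b) * α * α ^ (2 * j)) := by ring
      _ < (1 - r) ^ (2 * m) * (α ^ d * (1 - α) ^ d) *
          (bern p b * (1 - α) * (1 - α) ^ (2 * j)) := by
        refine mul_lt_mul_of_pos_left ?_ hpos
        exact mul_lt_mul hb hpow (by positivity) ((mul_nonneg hbn hα0.le).trans hb.le)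
      _ = _ := by ring
  · push Not at hc
    obtain ⟨i, hi⟩ := exists_step_of_ne_const x hc
    have hprod := prod_bern_step_le hr0 hr x i hi
    have hm : 1 ≤ m := by have := i.2; omega
    rw [jointMarkov_const]
    set d := distConst b y
    obtain ⟨j, hj⟩ : ∃ j, 2 * m - 1 = d + j := ⟨2 * m - 1 - d, by omega⟩
    have e0 : 2 * m + 1 = d + j + 2 := by omega
    have e1 : 2 * m + 1 - d = j + 2 := by omega
    have e2 : 2 * m = d + j + 1 := by omega
    have hpx : bern p (x 0) ≤ p := by
      cases x 0 <;> simp only [bern, if_true] <;> norm_num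
      linarith
    have hbp : p * α ≤ bern p b * (1 - α) := by
      cases b <;> simp only [bern, if_true] <;> norm_num <;> nlinarith
    have hy : ∏ k, bern α (xor (x k) (y k)) ≤ (1 - α) ^ (2 * m + 1) := by
      refine (Finset.prod_le_prod (fun k _ => bern_nonneg hα0.le (by linarith) _)
        fun k _ => bern_le_one_sub hα1.le _).trans (le_of_eq ?_)
      simp
    have hrlt : r * (1 - α) ^ (2 * m) < α ^ (2 * m) * (1 - r) := by
      rwa [div_pow, div_lt_div_iff₀ hr' (by positivity)] at hrα
    have hbern : 0 ≤ bern p (x 0) := bern_nonneg (by linarith) hp1.le _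
    have hpr0 : 0 ≤ ∏ k, bern α (xor (x k) (y k)) :=
      Finset.prod_nonneg fun k _ => bern_nonneg hα0.le (by linarith) _
    have hpow : α ^ j ≤ (1 - α) ^ j := pow_le_pow_left₀ hα0.le (by linarith) _
    have hp' : 0 < p := by linarith
    calc jointMarkov m p r α x y
        ≤ p * (r * (1 - r) ^ (2 * m - 1)) * (1 - α) ^ (2 * m + 1) := by
          refine mul_le_mul (mul_le_mul hpx hprod ?_ hp'.le) hy hpr0 (by positivity)
          exact Finset.prod_nonneg fun j _ => bern_nonneg hr0 hr1.le _
      _ = p * (1 - r) ^ (2 * m - 1) * (1 - α) * (r * (1 - α) ^ (2 * m)) := by ring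
      _ < p * (1 - r) ^ (2 * m - 1) * (1 - α) * (α ^ (2 * m) * (1 - r)) :=
          mul_lt_mul_of_pos_left hrlt (by positivity)
      _ = (1 - r) ^ (2 * m) * α ^ d * (1 - α) * ((p * α) * α ^ j) := by
          rw [hj, e2]; ring
      _ ≤ (1 - r) ^ (2 * m) * α ^ d * (1 - α) * ((bern p b * (1 - α)) * (1 - α) ^ j) := by
          refine mul_le_mul_of_nonneg_left ?_ (by positivity)
          exact mul_le_mul hbp hpow (by positivity)
            (mul_nonneg (bern_nonneg (by linarith) hp1.le _) hα'.le)
      _ = _ := by rw [e1]; ring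

lemma sum_distConst_false (n : ℕ) (f : ℕ → ℝ) :
    ∑ y : Fin n → Bool, f (distConst false y) =
      ∑ k ∈ Finset.range (n + 1), (n.choose k : ℝ) * f k := by
  let e : (Fin n → Bool) ≃ Finset (Fin n) :=
    { toFun := fun y => {k | y k = true}
      invFun := fun s k => decide (k ∈ s)
      left_inv := fun y => by ext k; simp
      right_inv := fun s => by ext k; simp }
  have h := Finset.sum_powerset_apply_card f (x := (univ : Finset (Fin n)))
  simp only [Finset.powerset_univ, Finset.card_univ, Fintype.card_fin, nsmul_eq_mul] at h
  rw [← h, ← e.sum_comp]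
  refine Finset.sum_congr rfl fun y _ => ?_
  congr 1
  simp [distConst, e]

lemma sum_jointMarkov_majority (m : ℕ) {p r α : ℝ} (hα : α ∈ Set.Ioo (0 : ℝ) (1 / 2)) :
    ∑ y, jointMarkov m p r α (fun _ => majority y) y =
      (1 - α) ^ (2 * m + 1) * (1 - r) ^ (2 * m) *
        ∑ k ∈ Finset.range (m + 1), (Nat.choose (2 * m + 1) k : ℝ) * (α / (1 - α)) ^ k := by
  have hα' : 1 - α ≠ 0 := by linarith [hα.2]
  have hpow : ∀ d ≤ 2 * m + 1, α ^ d * (1 - α) ^ (2 * m + 1 - d) =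
      (1 - α) ^ (2 * m + 1) * (α / (1 - α)) ^ d := fun d hd => by
    obtain ⟨j, hj⟩ := Nat.exists_eq_add_of_le hd
    rw [hj, Nat.add_sub_cancel_left, div_pow, pow_add]
    field_simp
  set C := (1 - α) ^ (2 * m + 1) * (1 - r) ^ (2 * m) with hC
  set ρ := α / (1 - α)
  let f : ℕ → ℝ := fun k => C * if m < k then p * ρ ^ (2 * m + 1 - k) else (1 - p) * ρ ^ k
  have hterm : ∀ y : Fin (2 * m + 1) → Bool,
      jointMarkov m p r α (fun _ => majority y) y = f (distConst false y) := fun y => by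
    rw [jointMarkov_const, hpow _ (distConst_le _ _)]
    have h := distConst_not false y
    rw [Bool.not_false] at h
    by_cases hy : m < distConst false y
    · simp only [majority, hy, decide_true, if_true, h, bern, f, hC]
      ring
    · simp only [majority, hy, decide_false, if_false, bern, Bool.false_eq_true, f, hC]
      ring
  rw [Finset.sum_congr rfl fun y _ => hterm y, sum_distConst_false,
    show 2 * m + 1 + 1 = (m + 1) + (m + 1) by ring, Finset.sum_range_add,
    ← Finset.sum_range_reflect (fun x => ((2 * m + 1).choose (m + 1 + x) : ℝ) * f (m + 1 + x)),
    ← Finset.sum_add_distrib, Finset.mul_sum]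
  refine Finset.sum_congr rfl fun k hk => ?_
  have hk : k ≤ m := Nat.lt_succ_iff.1 (Finset.mem_range.1 hk)
  have e : m + 1 + (m + 1 - 1 - k) = 2 * m + 1 - k := by omega
  have h1 : m < 2 * m + 1 - k := by omega
  have h2 : 2 * m + 1 - (2 * m + 1 - k) = k := by omega
  simp only [e, Nat.choose_symm (show k ≤ 2 * m + 1 by omega), f, h1, if_true, hk.not_gt, if_false,
    h2]
  ring

/-- The gain in correct guessing from distinguishing the majority bits of two vectors is largest at
the all-ones vector. -/
lemma jointMarkov_majority_sub_le (m : ℕ) {p r α : ℝ}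
    (hp : p ∈ Set.Ico (1 / 2 : ℝ) 1) (hα : α ∈ Set.Ioo (0 : ℝ) (1 / 2)) (hr1 : r < 1)
    (b : Bool) (y : Fin (2 * m + 1) → Bool) :
    jointMarkov m p r α (fun _ => majority y) y - jointMarkov m p r α (fun _ => b) y ≤
      (1 - r) ^ (2 * m) * (p * (1 - α) ^ (2 * m + 1) - (1 - p) * α ^ (2 * m + 1)) := by
  obtain ⟨hp0, hp1⟩ := hp
  obtain ⟨hα0, hα1⟩ := hα
  have hR : 0 ≤ (1 - r) ^ (2 * m) := pow_nonneg (by linarith) _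
  have upper : ∀ d ≤ 2 * m + 1, α ^ d * (1 - α) ^ (2 * m + 1 - d) ≤ (1 - α) ^ (2 * m + 1) :=
    fun d hd => by
      conv_rhs => rw [← Nat.add_sub_cancel' hd, pow_add]
      have : 0 ≤ 1 - α := by linarith
      gcongr
      linarith
  have lower : ∀ d ≤ 2 * m + 1, α ^ (2 * m + 1) ≤ α ^ d * (1 - α) ^ (2 * m + 1 - d) :=
    fun d hd => by
      conv_lhs => rw [← Nat.add_sub_cancel' hd, pow_add]
      gcongr
      linarith
  have hbern : ∀ a, bern p a ≤ p ∧ 1 - p ≤ bern p a ∧ 0 ≤ bern p a := fun a => by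
    cases a <;> simp only [bern, if_true] <;> norm_num <;> (try constructor) <;> linarith
  have hα' : 0 ≤ 1 - α := by linarith
  have first : ∀ a, bern p a * (α ^ distConst a y * (1 - α) ^ (2 * m + 1 - distConst a y)) ≤
      p * (1 - α) ^ (2 * m + 1) := fun a =>
    mul_le_mul (hbern a).1 (upper _ (distConst_le _ _)) (by positivity) (by linarith)
  have second : ∀ a, (1 - p) * α ^ (2 * m + 1) ≤
      bern p a * (α ^ distConst a y * (1 - α) ^ (2 * m + 1 - distConst a y)) := fun a =>
    mul_le_mul (hbern a).2.1 (lower _ (distConst_le _ _)) (by positivity) (hbern a).2.2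
  rw [jointMarkov_const, jointMarkov_const, mul_right_comm, mul_right_comm (bern p b),
    ← sub_mul, mul_comm]
  exact mul_le_mul_of_nonneg_left (sub_le_sub (first _) (second _)) hR

lemma jointMarkov_ones_sub (m : ℕ) (p r α : ℝ) :
    jointMarkov m p r α (fun _ => true) (fun _ => true) -
      jointMarkov m p r α (fun _ => false) (fun _ => true) =
      (1 - r) ^ (2 * m) * (p * (1 - α) ^ (2 * m + 1) - (1 - p) * α ^ (2 * m + 1)) := by
  have h := distConst_const_not (n := 2 * m + 1) true
  rw [Bool.not_true] at h
  simp [jointMarkov_const, distConst_const_self, h, bern]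
  ring

end MarkovSource

/-- Theorem 5: Markov private data, odd `n = 2m+1`. The value
`P_c(X^n|Y^n)` equals `T = (1−α)^n (1−r)^{n−1} Σ_{k=0}^{(n−1)/2} C(n,k)(α/(1−α))^k`,
and in the high-utility regime the optimal tradeoff `S(ε)` is squeezed between
`1 − ζ(ε)·Pr(Y^n = 1)` and `1 − ζ(ε)·α^n`, with the lower bound attained by the
`2^n`-ary Z-channel `Z_n(ζ(ε))`. -/
theorem markov_vector_high_utility (m : ℕ) (p r α : ℝ)
    (hp : p ∈ Set.Ico (1 / 2 : ℝ) 1) (hα : α ∈ Set.Ioo (0 : ℝ) (1 / 2))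
    (hr0 : 0 ≤ r) (hr1 : r < 1)
    (hnt : α * p < (1 - α) * (1 - p))
    (hrα : r / (1 - r) < (α / (1 - α)) ^ (2 * m)) :
    (∑ y, ⨆ x, jointMarkov m p r α x y) =
      (1 - α) ^ (2 * m + 1) * (1 - r) ^ (2 * m) *
        ∑ k ∈ Finset.range (m + 1),
          (Nat.choose (2 * m + 1) k : ℝ) * (α / (1 - α)) ^ k ∧
    (let T : ℝ := (1 - α) ^ (2 * m + 1) * (1 - r) ^ (2 * m) *
        ∑ k ∈ Finset.range (m + 1),
          (Nat.choose (2 * m + 1) k : ℝ) * (α / (1 - α)) ^ k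
     ∃ εL < T, ∀ ε ∈ Set.Icc εL T,
      let ζ : ℝ := (1 - r) * (T - ε) /
        (p * ((1 - α) * (1 - r)) ^ (2 * m + 1) -
          (1 - p) * (α * (1 - r)) ^ (2 * m + 1))
      let S : ℝ := sSup {u | ∃ F : (Fin (2 * m + 1) → Bool) → (Fin (2 * m + 1) → Bool) → ℝ,
        IsChannel F ∧ pcXZ (jointMarkov m p r α) F ≤ ε ∧
        u = pcYZ (jointMarkov m p r α) F}
      let Z := Zch (fun _ : Fin (2 * m + 1) => true) (fun _ : Fin (2 * m + 1) => false) ζ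
      (1 - ζ * ∑ x, jointMarkov m p r α x (fun _ => true) ≤ S ∧
        S ≤ 1 - ζ * α ^ (2 * m + 1)) ∧
      (IsChannel Z ∧ pcXZ (jointMarkov m p r α) Z ≤ ε ∧
        pcYZ (jointMarkov m p r α) Z =
          1 - ζ * ∑ x, jointMarkov m p r α x (fun _ => true))) := by
  have hlt := jointMarkov_lt_majority hp hα hr0 hr1 hnt hrα
  have hle : ∀ x y, jointMarkov m p r α x y ≤ jointMarkov m p r α (fun _ => majority y) y :=
    fun x y => by
      by_cases hx : x = fun _ => majority y
      · rw [← hx]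
      · exact (hlt x y hx).le
  have hT := sum_jointMarkov_majority m (p := p) (r := r) hα
  refine ⟨?_, ?_⟩
  · rw [← hT]
    exact Finset.sum_congr rfl fun y _ =>
      le_antisymm (ciSup_le fun x => hle x y)
        (le_iSup_of_finite (fun x => jointMarkov m p r α x y) _)
  intro T
  change _ = T at hT
  have hp0 : 0 ≤ p := by linarith [hp.1]
  have hp1 : p ≤ 1 := hp.2.le
  have hα0 : 0 < α := hα.1
  have hα1 : α ≤ 1 / 2 := hα.2.le
  have hr' : 0 < 1 - r := by linarith
  have hsum := sum_jointMarkov m p r α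
  have hq := pow_le_sum_jointMarkov m hp0 hp1 hr0 hr1.le hα0.le hα1
  have hαn : 0 < α ^ (2 * m + 1) := pow_pos hα0 _
  have hgap := jointMarkov_majority_sub_le m hp hα hr1
  have hones := jointMarkov_ones_sub m p r α
  set P := jointMarkov m p r α
  set D := (1 - r) ^ (2 * m) * (p * (1 - α) ^ (2 * m + 1) - (1 - p) * α ^ (2 * m + 1)) with hDdef
  have hne : (fun _ : Fin (2 * m + 1) => true) ≠ fun _ => false := fun h => by
    simpa using congrFun h 0
  have hD : 0 < D := by
    have h := hlt (fun _ => false) (fun _ => true) (by rw [majority_const]; exact hne.symm)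
    rw [majority_const] at h
    linarith
  -- A threshold below which the Z-channel leaves both optimal guesses at the zero vector unchanged.
  obtain ⟨δ, hδ, hsmall⟩ : ∃ δ > 0, ∀ ζ : ℝ, 0 ≤ ζ → ζ ≤ δ → ζ ≤ 1 ∧
      ζ * ∑ x, P x (fun _ => true) ≤ ∑ x, P x (fun _ => false) ∧
      ∀ x, P x (fun _ => false) + ζ * P x (fun _ => true) ≤
        P (fun _ => false) (fun _ => false) + ζ * P (fun _ => false) (fun _ => true) := by
    have hev : ∀ᶠ ζ : ℝ in nhds 0, ζ ≤ 1 ∧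
        ζ * ∑ x, P x (fun _ => true) ≤ ∑ x, P x (fun _ => false) ∧
        ∀ x, P x (fun _ => false) + ζ * P x (fun _ => true) ≤
          P (fun _ => false) (fun _ => false) + ζ * P (fun _ => false) (fun _ => true) := by
      refine (eventually_le_nhds one_pos).and (Filter.Eventually.and ?_ ?_)
      · have hc : Continuous fun ζ : ℝ => ζ * ∑ x, P x (fun _ => true) := by fun_prop
        refine (hc.tendsto 0).eventually_le_const ?_
        rw [zero_mul]
        exact hαn.trans_le (hq _)
      · refine Filter.eventually_all.2 fun x => ?_
        by_cases hx : x = fun _ => false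
        · rw [hx]
          exact Filter.Eventually.of_forall fun _ => le_rfl
        · have hc1 : Continuous fun ζ : ℝ => P x (fun _ => false) + ζ * P x (fun _ => true) := by
            fun_prop
          have hc2 : Continuous fun ζ : ℝ => P (fun _ => false) (fun _ => false) +
              ζ * P (fun _ => false) (fun _ => true) := by
            fun_prop
          refine ((hc1.tendsto 0).eventually_lt (hc2.tendsto 0) ?_).mono fun _ h => h.le
          have h := hlt x (fun _ => false) (by rwa [majority_const])
          rw [majority_const] at h
          simpa using h
    obtain ⟨δ, hδ, hball⟩ := Metric.eventually_nhds_iff.1 hev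
    refine ⟨δ / 2, half_pos hδ, fun ζ h0 h1 => hball ?_⟩
    rw [Real.dist_eq, sub_zero, abs_of_nonneg h0]
    linarith
  refine ⟨T - δ * D, by nlinarith, fun ε hε => ?_⟩
  intro ζ S Z
  have hζD : ζ * D = T - ε := by
    have e : p * ((1 - α) * (1 - r)) ^ (2 * m + 1) - (1 - p) * (α * (1 - r)) ^ (2 * m + 1) =
        (1 - r) * D := by
      rw [hDdef, mul_pow, mul_pow]; ring
    simp only [ζ, e]
    field_simp
  have hζ0 : 0 ≤ ζ := by
    by_contra h
    nlinarith [hε.2]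
  have hζδ : ζ ≤ δ := le_of_mul_le_mul_right (by linarith [hε.1]) hD
  obtain ⟨hζ1, hζq, hζP⟩ := hsmall ζ hζ0 hζδ
  have hZch : IsChannel Z := isChannel_Zch hne hζ0 hζ1
  have hZX : pcXZ P Z ≤ ε := by
    have h := pcXZ_Zch_le hne hζ1 P (fun y _ => majority y) hle (by
      simpa only [majority_const] using hζP)
    simp only [majority_const, hT, hones, hζD] at h
    linarith
  have hZY : pcYZ P Z = 1 - ζ * ∑ x, P x (fun _ => true) :=
    pcYZ_Zch hne hζ1 P (fun y => hαn.le.trans (hq y)) hsum hζq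
  have hupper : ∀ u ∈ {u | ∃ F : (Fin (2 * m + 1) → Bool) → (Fin (2 * m + 1) → Bool) → ℝ,
      IsChannel F ∧ pcXZ P F ≤ ε ∧ u = pcYZ P F}, u ≤ 1 - ζ * α ^ (2 * m + 1) := by
    rintro u ⟨F, hF, hFX, rfl⟩
    have h := mul_sub_pcXZ_le_one_sub_pcYZ P (fun y _ => majority y) (α ^ (2 * m + 1) / D)
      (by positivity) (fun y y' => ?_) hsum F hF
    · rw [hT] at h
      have h2 : ζ * α ^ (2 * m + 1) ≤ α ^ (2 * m + 1) / D * (T - pcXZ P F) := by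
        have : ζ * α ^ (2 * m + 1) = α ^ (2 * m + 1) / D * (T - ε) := by
          rw [← hζD]; field_simp
        rw [this]
        gcongr
      linarith
    · refine le_trans ?_ (hq y)
      calc _ ≤ α ^ (2 * m + 1) / D * D :=
            mul_le_mul_of_nonneg_left (hgap (majority y') y) (by positivity)
        _ = _ := by field_simp
  exact ⟨⟨hZY ▸ le_csSup ⟨_, hupper⟩ ⟨Z, hZch, hZX, rfl⟩,
    csSup_le ⟨_, Z, hZch, hZX, rfl⟩ hupper⟩, hZch, hZX, hZY⟩
end

section
/- Let U and V be real-valued random variables on a common probability space, neither of which is almost surely constant, and let ε ∈ [0, 1]. Then mmse(f(U)|V) ≥ (1−ε)·Var(f(U)) for every Borel function f : ℝ → ℝ with 0 < Var(f(U)) < ∞ if and only if ρ_m(U,V)² ≤ ε. -/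
open MeasureTheory ProbabilityTheory

variable {Ω : Type*} [MeasurableSpace Ω]

/-- `mmse(W|V) = E[(W − E[W|V])²]`: the minimum mean squared error of estimating `W`
from `V` (conditional expectation taken w.r.t. the σ-algebra generated by `V`). -/
noncomputable def mmse (μ : Measure Ω) (W V : Ω → ℝ) : ℝ :=
  ∫ ω, (W ω - (μ[W | MeasurableSpace.comap V Real.measurableSpace]) ω) ^ 2 ∂μ

/-- The Pearson correlation coefficient `ρ(U,V)`. -/
noncomputable def corr (μ : Measure Ω) (U V : Ω → ℝ) : ℝ :=
  (∫ ω, (U ω - ∫ x, U x ∂μ) * (V ω - ∫ x, V x ∂μ) ∂μ) /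
    (Real.sqrt (variance U μ) * Real.sqrt (variance V μ))

/-- `f ∈ S_U`: `f` is Borel measurable and `0 < Var(f(U)) < ∞`. -/
def MemS (μ : Measure Ω) (U : Ω → ℝ) (f : ℝ → ℝ) : Prop :=
  Measurable f ∧ 0 < evariance (f ∘ U) μ ∧ evariance (f ∘ U) μ < ⊤

/-- The Hirschfeld–Gebelein–Rényi maximal correlation
`ρ_m(U,V) = sup{ρ(f(U), g(V)) : f ∈ S_U, g ∈ S_V}` (equal to `0`, the real `sSup` of
the empty set, if `S_U` or `S_V` is empty). -/
noncomputable def maxCorr (μ : Measure Ω) (U V : Ω → ℝ) : ℝ :=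
  sSup {c | ∃ f g : ℝ → ℝ, MemS μ U f ∧ MemS μ V g ∧ c = corr μ (f ∘ U) (g ∘ V)}

section

variable {Ω : Type*} [m₀ : MeasurableSpace Ω] {μ : Measure Ω}

lemma corr_eq_covariance_div (X Y : Ω → ℝ) :
    corr μ X Y = covariance X Y μ / (√(variance X μ) * √(variance Y μ)) :=
  rfl

lemma corr_sq (X Y : Ω → ℝ) :
    corr μ X Y ^ 2 = covariance X Y μ ^ 2 / (variance X μ * variance Y μ) := by
  rw [corr_eq_covariance_div, div_pow, mul_pow, Real.sq_sqrt (variance_nonneg _ _),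
    Real.sq_sqrt (variance_nonneg _ _)]

lemma MemS.variance_pos {U : Ω → ℝ} {f : ℝ → ℝ} (hf : MemS μ U f) :
    0 < variance (f ∘ U) μ :=
  ENNReal.toReal_pos hf.2.1.ne' hf.2.2.ne

lemma MemS.of_variance_pos {U : Ω → ℝ} {f : ℝ → ℝ} (hf : Measurable f)
    (h : 0 < variance (f ∘ U) μ) : MemS μ U f :=
  ⟨hf, (ENNReal.toReal_pos_iff.1 h).1, (ENNReal.toReal_pos_iff.1 h).2⟩

lemma abs_maxCorr_le {U V : Ω → ℝ} {r : ℝ} (hr : 0 ≤ r)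
    (h : ∀ f g, MemS μ U f → MemS μ V g → |corr μ (f ∘ U) (g ∘ V)| ≤ r) :
    |maxCorr μ U V| ≤ r := by
  have hub : ∀ c ∈ {c | ∃ f g : ℝ → ℝ, MemS μ U f ∧ MemS μ V g ∧
      c = corr μ (f ∘ U) (g ∘ V)}, |c| ≤ r := by
    rintro _ ⟨f, g, hf, hg, rfl⟩
    exact h f g hf hg
  refine abs_le.2 ⟨?_, Real.sSup_le (fun c hc ↦ (abs_le.1 (hub c hc)).2) hr⟩
  rw [maxCorr]
  obtain hS | ⟨c, hc⟩ := Set.eq_empty_or_nonempty {c | ∃ f g : ℝ → ℝ, MemS μ U f ∧ MemS μ V g ∧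
      c = corr μ (f ∘ U) (g ∘ V)}
  · rw [hS, Real.sSup_empty]
    linarith
  · exact (abs_le.1 (hub c hc)).1.trans
      (le_csSup ⟨r, fun c hc ↦ (abs_le.1 (hub c hc)).2⟩ hc)

variable [IsProbabilityMeasure μ]

/-- **Cauchy–Schwarz inequality** for the covariance. -/
lemma covariance_sq_le_variance_mul_variance {X Y : Ω → ℝ}
    (hX : MemLp X 2 μ) (hY : MemLp Y 2 μ) :
    covariance X Y μ ^ 2 ≤ variance X μ * variance Y μ := by
  have h (t : ℝ) :
      0 ≤ variance Y μ * (t * t) + 2 * covariance X Y μ * t + variance X μ := by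
    have h₁ := variance_nonneg (X + t • Y) μ
    rw [variance_add hX (hY.const_smul t), variance_smul, covariance_smul_right] at h₁
    linarith
  have h₂ := discrim_le_zero h
  rw [discrim] at h₂
  linarith

/-- The covariance with an `m`-measurable variable only depends on the conditional expectation
given `m`. -/
lemma covariance_condExp_left {m : MeasurableSpace Ω} (hm : m ≤ m₀) {X Y : Ω → ℝ}
    (hX : MemLp X 2 μ) (hY : MemLp Y 2 μ) (hYm : StronglyMeasurable[m] Y) :
    covariance (μ[X | m]) Y μ = covariance X Y μ := by
  have h : ∫ ω, (μ[X | m] * Y) ω ∂μ = ∫ ω, (X * Y) ω ∂μ := by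
    rw [← integral_condExp hm (f := X * Y)]
    exact integral_congr_ae (condExp_mul_of_stronglyMeasurable_right hYm
      (hX.integrable_mul hY) (hX.integrable one_le_two)).symm
  rw [covariance_eq_sub hX hY, covariance_eq_sub (hX.condExp one_le_two) hY, h,
    integral_condExp hm]

lemma mmse_add_variance_condExp {W V : Ω → ℝ} (hV : Measurable V) (hW : MemLp W 2 μ) :
    mmse μ W V + variance (μ[W | MeasurableSpace.comap V Real.measurableSpace]) μ
      = variance W μ := by
  rw [← integral_condVar_add_variance_condExp hV.comap_le hW, condVar,
    integral_condExp hV.comap_le]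
  rfl

lemma abs_corr_le_one {X Y : Ω → ℝ} (hX : MemLp X 2 μ) (hY : MemLp Y 2 μ) :
    |corr μ X Y| ≤ 1 := by
  rw [← sq_le_one_iff_abs_le_one, corr_sq]
  exact div_le_one_of_le₀ (covariance_sq_le_variance_mul_variance hX hY)
    (mul_nonneg (variance_nonneg _ _) (variance_nonneg _ _))

lemma MemS.memLp {U : Ω → ℝ} {f : ℝ → ℝ} (hU : Measurable U) (hf : MemS μ U f) :
    MemLp (f ∘ U) 2 μ :=
  (evariance_lt_top_iff_memLp (hf.1.comp hU).aestronglyMeasurable).1 hf.2.2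

lemma corr_le_maxCorr {U V : Ω → ℝ} (hU : Measurable U) (hV : Measurable V) {f g : ℝ → ℝ}
    (hf : MemS μ U f) (hg : MemS μ V g) : corr μ (f ∘ U) (g ∘ V) ≤ maxCorr μ U V := by
  refine le_csSup ⟨1, ?_⟩ ⟨f, g, hf, hg, rfl⟩
  rintro _ ⟨f, g, hf, hg, rfl⟩
  exact (abs_le.1 (abs_corr_le_one (hf.memLp hU) (hg.memLp hV))).2

lemma corr_sq_le_variance_condExp_div {U V : Ω → ℝ} (hU : Measurable U) (hV : Measurable V)
    {f g : ℝ → ℝ} (hf : MemS μ U f) (hg : MemS μ V g) :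
    corr μ (f ∘ U) (g ∘ V) ^ 2 ≤
      variance (μ[f ∘ U | MeasurableSpace.comap V Real.measurableSpace]) μ
        / variance (f ∘ U) μ := by
  have hW := hf.memLp hU
  have hY := hg.memLp hV
  have hYm : StronglyMeasurable[MeasurableSpace.comap V Real.measurableSpace] (g ∘ V) :=
    (hg.1.comp (comap_measurable V)).stronglyMeasurable
  have hcs := covariance_sq_le_variance_mul_variance
    (hW.condExp (m := MeasurableSpace.comap V Real.measurableSpace) one_le_two) hY
  rw [covariance_condExp_left hV.comap_le hW hY hYm] at hcs
  rw [corr_sq, ← mul_div_mul_right _ (variance (f ∘ U) μ) hg.variance_pos.ne']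
  exact div_le_div_of_nonneg_right hcs (mul_pos hf.variance_pos hg.variance_pos).le

lemma variance_condExp_le_maxCorr_sq_mul {U V : Ω → ℝ} (hU : Measurable U) (hV : Measurable V)
    {f : ℝ → ℝ} (hf : MemS μ U f) :
    variance (μ[f ∘ U | MeasurableSpace.comap V Real.measurableSpace]) μ ≤
      maxCorr μ U V ^ 2 * variance (f ∘ U) μ := by
  have hWpos := hf.variance_pos
  have hW := hf.memLp hU
  have hH := hW.condExp (m := MeasurableSpace.comap V Real.measurableSpace) one_le_two
  have hHm : StronglyMeasurable[MeasurableSpace.comap V Real.measurableSpace]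
    (μ[f ∘ U | MeasurableSpace.comap V Real.measurableSpace]) := stronglyMeasurable_condExp
  have hcov := covariance_condExp_left hV.comap_le hW hH hHm
  rw [covariance_self hH.aemeasurable] at hcov
  obtain ⟨g, hg, hgV⟩ := hHm.measurable.exists_eq_measurable_comp
  rw [hgV] at hcov ⊢
  obtain h0 | hpos := (variance_nonneg (g ∘ V) μ).eq_or_lt
  · rw [← h0]
    positivity
  have hle := corr_le_maxCorr hU hV hf (MemS.of_variance_pos hg hpos)
  have hnonneg : 0 ≤ corr μ (f ∘ U) (g ∘ V) := by
    rw [corr_eq_covariance_div, ← hcov]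
    positivity
  have hsq := pow_le_pow_left₀ hnonneg hle 2
  rw [corr_sq, ← hcov, sq (variance (g ∘ V) μ), mul_div_mul_right _ _ hpos.ne',
    div_le_iff₀ hWpos] at hsq
  exact hsq

end

/-- Theorem 6: for non-degenerate real random variables `U, V` and
`ε ∈ [0,1]`, `mmse(f(U)|V) ≥ (1−ε)·Var(f(U))` for every `f ∈ S_U` if and only if
`ρ_m(U,V)² ≤ ε`. -/
theorem mmse_ge_iff_maxCorr_sq_le (μ : Measure Ω) [IsProbabilityMeasure μ]
    (U V : Ω → ℝ) (hU : Measurable U) (hV : Measurable V)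
    (hUnc : ¬ ∃ c : ℝ, U =ᵐ[μ] fun _ => c)
    (hVnc : ¬ ∃ c : ℝ, V =ᵐ[μ] fun _ => c)
    (ε : ℝ) (hε : ε ∈ Set.Icc (0 : ℝ) 1) :
    (∀ f : ℝ → ℝ, MemS μ U f →
        (1 - ε) * variance (f ∘ U) μ ≤ mmse μ (f ∘ U) V) ↔
      maxCorr μ U V ^ 2 ≤ ε := by
  have hiff (f : ℝ → ℝ) (hf : MemS μ U f) :
      (1 - ε) * variance (f ∘ U) μ ≤ mmse μ (f ∘ U) V ↔
        variance (μ[f ∘ U | MeasurableSpace.comap V Real.measurableSpace]) μ ≤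
          ε * variance (f ∘ U) μ := by
    have h := mmse_add_variance_condExp hV (hf.memLp hU)
    constructor <;> intro h' <;> linarith
  constructor
  · intro h
    rw [← Real.sq_sqrt hε.1]
    refine sq_le_sq.2 ?_
    rw [abs_of_nonneg (Real.sqrt_nonneg ε)]
    refine abs_maxCorr_le (Real.sqrt_nonneg ε) fun f g hf hg ↦ Real.abs_le_sqrt ?_
    exact (corr_sq_le_variance_condExp_div hU hV hf hg).trans
      ((div_le_iff₀ hf.variance_pos).2 ((hiff f hf).1 (h f hf)))
  · intro h f hf
    exact (hiff f hf).2 ((variance_condExp_le_maxCorr_sq_mul hU hV hf).trans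
      (mul_le_mul_of_nonneg_right h (variance_nonneg _ _)))
end
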